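/- Let p, q ∈ ℚ[X] with q ≠ 0. Suppose that for every integer n ≥ 1 with q(n) ≠ 0 the value p(n)/q(n) is an integer. Then q divides p in ℚ[X] (equivalently, the rational function p/q is a polynomial). -/

import Mathlib

open Polynomial Filter in
/-- If a rational function `p/q` over `ℚ` takes integer values at all positive
integers (where `q` does not vanish), then `q` divides `p`, i.e. `p/q` is a
polynomial. -/
theorem dvd_of_integer_valued_ratio (p q : Polynomial ℚ) (hq : q ≠ 0)
    (h : ∀ n : ℕ, 1 ≤ n → q.eval (n : ℚ) ≠ 0 →
      ∃ z : ℤ, p.eval (n : ℚ) / q.eval (n : ℚ) = (z : ℚ)) :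
    q ∣ p := by
  obtain ⟨b, hb⟩ := IsLocalization.integerNormalization_spec (nonZeroDivisors ℤ) (p / q)
  obtain ⟨hbM, hb⟩ := hb
  have hb0 : (b : ℤ) ≠ 0 := nonZeroDivisors.ne_zero hbM
  have hbq : (b : ℚ) ≠ 0 := by exact_mod_cast hb0
  set s := IsLocalization.integerNormalization (nonZeroDivisors ℤ) (p / q) with hs
  have hdecomp : q * (p / q) + p % q = p := EuclideanDomain.div_add_mod p q
  have hdeg : (p % q).degree < q.degree := EuclideanDomain.mod_lt p hq
  rw [← EuclideanDomain.mod_eq_zero]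
  have ht := (Polynomial.div_tendsto_atTop_zero_of_degree_lt (p % q) q hdeg).comp
    (tendsto_natCast_atTop_atTop (R := ℚ))
  have ht2 := ht.const_mul (b : ℚ)
  rw [mul_zero] at ht2
  have he := ht2.eventually (Metric.ball_mem_nhds (0 : ℚ) one_pos)
  have hnr := (tendsto_natCast_atTop_atTop (R := ℚ)).eventually
    (Polynomial.eventually_atTop_not_isRoot q hq)
  have hz : ∀ᶠ n : ℕ in atTop, (p % q).eval (n : ℚ) = 0 := by
    filter_upwards [he, hnr, eventually_ge_atTop 1] with n h1 h2 h3
    have h2' : q.eval (n : ℚ) ≠ 0 := h2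
    obtain ⟨z, hz⟩ := h n h3 h2'
    have hsn : ((s.eval (n : ℤ) : ℤ) : ℚ) = b * (p / q).eval (n : ℚ) := by
      have := congrArg (Polynomial.eval (n : ℚ)) hb
      simp only [zsmul_eq_mul, Polynomial.eval_mul, Polynomial.eval_intCast] at this
      rw [← this, show (n : ℚ) = algebraMap ℤ ℚ (n : ℤ) by simp, Polynomial.eval_map_algebraMap,
        Polynomial.aeval_algebraMap_apply]
      simp
    have hp := congrArg (Polynomial.eval (n : ℚ)) hdecomp
    simp only [Polynomial.eval_add, Polynomial.eval_mul] at hp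
    have key : (b : ℚ) * ((p % q).eval (n : ℚ) / q.eval (n : ℚ)) =
        ((b * z - s.eval (n : ℤ) : ℤ) : ℚ) := by
      push_cast
      rw [hsn, ← hz, ← hp]
      field_simp
      ring
    have h1' : |(b : ℚ) * ((p % q).eval (n : ℚ) / q.eval (n : ℚ))| < 1 := by
      have := mem_ball_zero_iff.mp h1
      rw [← Rat.norm_cast_real, Real.norm_eq_abs] at this
      simp only [Function.comp] at this
      exact_mod_cast this
    rw [key] at h1'
    have h4 : |b * z - s.eval (n : ℤ)| < 1 := by exact_mod_cast h1'
    rw [Int.abs_lt_one_iff.mp h4] at key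
    simpa [hbq, h2'] using key
  by_contra hr
  have hnr2 := (tendsto_natCast_atTop_atTop (R := ℚ)).eventually
    (Polynomial.eventually_atTop_not_isRoot (p % q) hr)
  obtain ⟨n, h1, h2⟩ := (hz.and hnr2).exists
  exact h2 h1
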